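/- For every even integer n ≥ 10 and every positive integer k such that the DFA 𝒜_n^k is standardized, the DFA 𝒜_n^k fulfills Don's conjecture: every nonempty subset S ⊆ ℤ_n has a reaching word in 𝒜_n^k of length at most n·(n − |S|). -/

import Mathlib

/-!
Every proper nonempty set `S` of states is the image of a strictly larger set under a word of
length at most `n`; induction on `n - |S|` then gives Don's conjecture.

Put `m = n / 2` and let `e` be the action of the standardized letter. The map `deltaA n` misses
only `0` and sends both `n - 1` and `n - 2` to `m`, so standardization forces
`k ≡ -1` or `k ≡ -2`, i.e. `e 0 = m`. The word `a b^i` acts as `q ↦ e q + i`; if `i ∉ S`, then `S`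
is the image of its full preimage under this word, and that preimage is strictly larger than `S`
as soon as `i + m ∈ S` (`image_preimage_step`, `card_lt_step`).

* If some `i ∉ S` has `i + m ∈ S`, then one word `a b^i` suffices, of length at most `n`.
* Otherwise `S` is invariant under translation by `m`. As `S` is proper and nonempty, a gap of `S`
  starts at some `i` (`i ∉ S`, `i - 1 ∈ S`), and by invariance `0 ≤ i < m`. Let `T` be the preimage
  of `S` under `a b^i`, and `j = -1 - k`, which is `0` or `1`. Then `e j + i = m + i ∉ S`, whereas
  `e (j + m) + i = m - 1 + i ∈ S`, that is `j ∉ T` and `j + m ∈ T`. So `T` falls under the first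
  case with this `j`, and `a b^j a b^i` has length at most `m + 2 ≤ n` (`exists_larger`).
-/

/-- The two-letter alphabet of a binary DFA. -/
inductive Letter where
  | a : Letter
  | b : Letter

/-- Left-to-right action of a word on `ZMod n`, where the letter `b` acts as `q ↦ q + 1`
(a cyclic permutation) and the letter `a` acts as the given map `δa`. -/
def act {n : ℕ} (δa : ZMod n → ZMod n) : List Letter → ZMod n → ZMod n
  | [], q => q
  | Letter.a :: w, q => act δa w (δa q)
  | Letter.b :: w, q => act δa w (q + 1)

/-- A binary circular DFA is completely reachable if every nonempty subset of states
is the image of the full state set under the action of some word. -/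
def CompletelyReachable {n : ℕ} (δa : ZMod n → ZMod n) : Prop :=
  ∀ S : Set (ZMod n), S.Nonempty → ∃ w : List Letter, act δa w '' Set.univ = S

/-- A binary circular DFA is standardized if `0` has no `δa`-preimage and `δa 0` is the
unique state with more than one `δa`-preimage. -/
def Standardized {n : ℕ} (δa : ZMod n → ZMod n) : Prop :=
  (∀ q : ZMod n, δa q ≠ 0) ∧
  ∀ p : ZMod n, 1 < {q : ZMod n | δa q = p}.ncard ↔ p = δa 0

/-- The orbit `O(𝒜) = {δa^i(0) : i ≥ 1}`. -/
def orbitSet {n : ℕ} (δa : ZMod n → ZMod n) : Set (ZMod n) :=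
  {q : ZMod n | ∃ i : ℕ, 1 ≤ i ∧ δa^[i] 0 = q}

/-- The orbit subgroup `K(𝒜)`: the subgroup of `(ZMod n, +)` generated by the orbit. -/
def orbitSubgroup {n : ℕ} (δa : ZMod n → ZMod n) : AddSubgroup (ZMod n) :=
  AddSubgroup.closure (orbitSet δa)

/-- The action of the letter `a` in the DFA `𝒜_n` (for even `n ≥ 10`):
`0 ↦ n−3 ↦ 1 ↦ n−2 ↦ n/2 ↦ n−4 ↦ n−1 ↦ n/2`, all other states are fixed. -/
def deltaA (n : ℕ) : ZMod n → ZMod n := fun q =>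
  if q = 0 then ((n - 3 : ℕ) : ZMod n)
  else if q = ((n - 3 : ℕ) : ZMod n) then 1
  else if q = 1 then ((n - 2 : ℕ) : ZMod n)
  else if q = ((n - 2 : ℕ) : ZMod n) then ((n / 2 : ℕ) : ZMod n)
  else if q = ((n / 2 : ℕ) : ZMod n) then ((n - 4 : ℕ) : ZMod n)
  else if q = ((n - 4 : ℕ) : ZMod n) then ((n - 1 : ℕ) : ZMod n)
  else if q = ((n - 1 : ℕ) : ZMod n) then ((n / 2 : ℕ) : ZMod n)
  else q

theorem act_append {n : ℕ} (e : ZMod n → ZMod n) (u v : List Letter) (q : ZMod n) :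
    act e (u ++ v) q = act e v (act e u q) := by
  induction u generalizing q with
  | nil => rfl
  | cons x u ih => cases x <;> simp [act, ih]

theorem act_replicate_b {n : ℕ} (e : ZMod n → ZMod n) (i : ℕ) (q : ZMod n) :
    act e (List.replicate i Letter.b) q = q + i := by
  induction i generalizing q with
  | zero => simp [act]
  | succ i ih => simp [List.replicate_succ, act, ih]; ring

/-- The word `a b^i`, with the exponent given as a residue. -/
def stepWord {n : ℕ} (i : ZMod n) : List Letter :=
  Letter.a :: List.replicate i.val Letter.b

theorem act_stepWord {n : ℕ} [NeZero n] (e : ZMod n → ZMod n) (i q : ZMod n) :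
    act e (stepWord i) q = e q + i := by
  simp [stepWord, act, act_replicate_b]

theorem length_stepWord {n : ℕ} (i : ZMod n) : (stepWord i).length = i.val + 1 := by
  simp [stepWord]

/-- The preimage of `S` under the word `a b^i`. -/
def stepPre {n : ℕ} (e : ZMod n → ZMod n) (i : ZMod n) (S : Set (ZMod n)) : Set (ZMod n) :=
  {q | e q + i ∈ S}

theorem image_preimage_step {n : ℕ} (e : ZMod n → ZMod n)
    (hsurj : ∀ p, p ≠ 0 → ∃ q, e q = p) {S : Set (ZMod n)} {i : ZMod n} (hi : i ∉ S) :
    (fun q => e q + i) '' stepPre e i S = S := by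
  ext p
  constructor
  · rintro ⟨q, hq, rfl⟩
    exact hq
  · intro hp
    have hne : p - i ≠ 0 := by
      intro h
      rw [sub_eq_zero] at h
      exact hi (h ▸ hp)
    obtain ⟨q, hq⟩ := hsurj _ hne
    have hqp : e q + i = p := by rw [hq]; ring
    exact ⟨q, by simpa [stepPre, hqp] using hp, hqp⟩

theorem card_le_step {n : ℕ} [NeZero n] (e : ZMod n → ZMod n)
    (hsurj : ∀ p, p ≠ 0 → ∃ q, e q = p) {S : Set (ZMod n)} {i : ZMod n} (hi : i ∉ S) :
    S.ncard ≤ (stepPre e i S).ncard := by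
  conv_lhs => rw [← image_preimage_step e hsurj hi]
  exact Set.ncard_image_le (Set.toFinite _)

/-- If the state `μ` with two preimages is hit, taking the preimage gains a state. -/
theorem card_lt_step {n : ℕ} [NeZero n] (e : ZMod n → ZMod n)
    (hsurj : ∀ p, p ≠ 0 → ∃ q, e q = p) {x y μ : ZMod n} (hxy : x ≠ y) (hx : e x = μ)
    (hy : e y = μ) {S : Set (ZMod n)} {i : ZMod n} (hi : i ∉ S) (him : i + μ ∈ S) :
    S.ncard < (stepPre e i S).ncard := by
  refine lt_of_le_of_ne (card_le_step e hsurj hi) fun h => hxy ?_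
  have hinj : Set.InjOn (fun q => e q + i) (stepPre e i S) := by
    refine Set.injOn_of_ncard_image_eq ?_ (Set.toFinite _)
    rw [image_preimage_step e hsurj hi, h]
  rw [add_comm] at him
  exact hinj (by simpa [stepPre, hx] using him) (by simpa [stepPre, hy] using him)
    (by simp [hx, hy])

/-- The extension step: a proper nonempty set is the image of a larger set under a word of
length at most `n`. Here `m` is half of `n`, and `j` is a small state with `e j = m` whose
antipode `j + m` is mapped to `m - 1`. -/
theorem exists_larger {n m : ℕ} [NeZero n] (hm : n = m + m) (hm2 : 2 ≤ m) (e : ZMod n → ZMod n)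
    (hsurj : ∀ p, p ≠ 0 → ∃ q, e q = p) {x y j : ZMod n} (hxy : x ≠ y)
    (hx : e x = m) (hy : e y = m) (hj : e j = m) (hj' : e (j + m) = m - 1) (hjv : j.val ≤ 1)
    {S : Set (ZMod n)} (hne : S.Nonempty) (hpr : S ≠ Set.univ) :
    ∃ (T : Set (ZMod n)) (w : List Letter),
      act e w '' T = S ∧ S.ncard < T.ncard ∧ w.length ≤ n := by
  have hact (i : ZMod n) : act e (stepWord i) = fun q => e q + i := funext (act_stepWord e i)
  by_cases hA : ∃ i, i ∉ S ∧ i + m ∈ S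
  · obtain ⟨i, hi, him⟩ := hA
    refine ⟨stepPre e i S, stepWord i, ?_, card_lt_step e hsurj hxy hx hy hi him, ?_⟩
    · rw [hact]; exact image_preimage_step e hsurj hi
    · rw [length_stepWord]; exact ZMod.val_lt i
  · have hA' : ∀ i, i ∉ S → i + m ∉ S := by simpa using hA
    have hmm : (m : ZMod n) + m = 0 := by
      rw [← Nat.cast_add, ← hm, ZMod.natCast_self]
    have hper : ∀ i, i ∈ S → i + m ∈ S := by
      intro i hi
      by_contra h
      have := hA' _ h
      rw [add_assoc, hmm, add_zero] at this
      exact this hi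
    -- Without a gap start, `S` would be closed under successors.
    have hgap : ∃ i, i ∉ S ∧ i - 1 ∈ S := by
      by_contra! h
      obtain ⟨s, hs⟩ := hne
      have hall : ∀ t : ℕ, s + t ∈ S := by
        intro t
        induction t with
        | zero => simpa using hs
        | succ t ih =>
          by_contra hc
          have := h _ hc
          push_cast at this
          rw [← add_assoc, add_sub_cancel_right] at this
          exact this ih
      apply hpr
      ext p
      simpa using hall (p - s).val
    obtain ⟨i, hi, hi1, hiv⟩ : ∃ i : ZMod n, i ∉ S ∧ i - 1 ∈ S ∧ i.val < m := by
      obtain ⟨i, hi, hi1⟩ := hgap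
      by_cases hv : i.val < m
      · exact ⟨i, hi, hi1, hv⟩
      · have hlt := ZMod.val_lt i
        have hi' : i + m = ((i.val - m : ℕ) : ZMod n) := by
          rw [Nat.cast_sub (not_lt.mp hv), ZMod.natCast_zmod_val, sub_eq_add_neg,
            neg_eq_of_add_eq_zero_left hmm]
        refine ⟨i + m, hA' i hi, ?_, ?_⟩
        · have := hper _ hi1
          rwa [sub_add_eq_add_sub] at this
        · rw [hi', ZMod.val_natCast_of_lt (by omega)]
          omega
    have hjT : j ∉ stepPre e i S := by
      have := hA' i hi
      rw [add_comm] at this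
      simpa [stepPre, hj] using this
    have hjT' : j + m ∈ stepPre e i S := by
      have := hper _ hi1
      have heq : (m : ZMod n) - 1 + i = i - 1 + m := by ring
      simpa [stepPre, hj', heq] using this
    refine ⟨stepPre e j (stepPre e i S), stepWord j ++ stepWord i, ?_, ?_, ?_⟩
    · have : act e (stepWord j ++ stepWord i) = act e (stepWord i) ∘ act e (stepWord j) :=
        funext (act_append e _ _)
      rw [this, Set.image_comp, hact, hact, image_preimage_step e hsurj hjT,
        image_preimage_step e hsurj hi]
    · exact (card_le_step e hsurj hi).trans_lt (card_lt_step e hsurj hxy hx hy hjT hjT')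
    · rw [List.length_append, length_stepWord, length_stepWord]
      omega

theorem natCast_inj_of_lt {n a b : ℕ} (ha : a < n) (hb : b < n) :
    (a : ZMod n) = (b : ZMod n) ↔ a = b := by
  rw [ZMod.natCast_eq_natCast_iff', Nat.mod_eq_of_lt ha, Nat.mod_eq_of_lt hb]

/-- `deltaA n` computed on natural representatives. -/
theorem deltaA_natCast {n : ℕ} (hn : 10 ≤ n) {x : ℕ} (hx : x < n) :
    deltaA n (x : ZMod n) =
      ((if x = 0 then n - 3 else if x = n - 3 then 1 else if x = 1 then n - 2
        else if x = n - 2 then n / 2 else if x = n / 2 then n - 4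
        else if x = n - 4 then n - 1 else if x = n - 1 then n / 2 else x : ℕ) : ZMod n) := by
  have h0 : (x : ZMod n) = 0 ↔ x = 0 := by
    simpa using natCast_inj_of_lt hx (b := 0) (by omega)
  have h1 : (x : ZMod n) = 1 ↔ x = 1 := by
    simpa using natCast_inj_of_lt hx (b := 1) (by omega)
  unfold deltaA
  simp only [h0, h1, natCast_inj_of_lt hx (show n - 3 < n by omega),
    natCast_inj_of_lt hx (show n - 2 < n by omega), natCast_inj_of_lt hx (show n / 2 < n by omega),
    natCast_inj_of_lt hx (show n - 4 < n by omega), natCast_inj_of_lt hx (show n - 1 < n by omega)]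
  split_ifs <;> simp

theorem deltaA_surj {n : ℕ} (hn : 10 ≤ n) (p : ZMod n) (hp : p ≠ 0) :
    ∃ q, deltaA n q = p := by
  have : NeZero n := ⟨by omega⟩
  obtain ⟨y, hy, rfl⟩ : ∃ y : ℕ, y < n ∧ (y : ZMod n) = p :=
    ⟨p.val, ZMod.val_lt p, ZMod.natCast_zmod_val p⟩
  have hy0 : y ≠ 0 := by rintro rfl; simp at hp
  suffices h : ∃ x : ℕ, x < n ∧ (if x = 0 then n - 3 else if x = n - 3 then 1
      else if x = 1 then n - 2 else if x = n - 2 then n / 2 else if x = n / 2 then n - 4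
      else if x = n - 4 then n - 1 else if x = n - 1 then n / 2 else x) = y by
    obtain ⟨x, hx, hxy⟩ := h
    exact ⟨x, by rw [deltaA_natCast hn hx, hxy]⟩
  by_cases h1 : y = n - 3
  · exact ⟨0, by omega, by rw [if_pos rfl, h1]⟩
  by_cases h2 : y = 1
  · exact ⟨n - 3, by omega, by rw [if_neg (by omega), if_pos rfl, h2]⟩
  by_cases h3 : y = n - 2
  · exact ⟨1, by omega, by rw [if_neg (by omega), if_neg (by omega), if_pos rfl, h3]⟩
  by_cases h4 : y = n / 2
  · exact ⟨n - 2, by omega, by rw [if_neg (by omega), if_neg (by omega),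
      if_neg (by omega), if_pos rfl, h4]⟩
  by_cases h5 : y = n - 4
  · exact ⟨n / 2, by omega, by rw [if_neg (by omega), if_neg (by omega),
      if_neg (by omega), if_neg (by omega), if_pos rfl, h5]⟩
  by_cases h6 : y = n - 1
  · exact ⟨n - 4, by omega, by rw [if_neg (by omega), if_neg (by omega),
      if_neg (by omega), if_neg (by omega),
      if_neg (by omega), if_pos rfl, h6]⟩
  exact ⟨y, hy, by grind⟩

/-- Only `n - 1` and `n - 2` are mapped to `n / 2`. -/
theorem eq_of_deltaA_eq_half {n : ℕ} (hn : 10 ≤ n) {q : ZMod n}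
    (h : deltaA n q = ((n / 2 : ℕ) : ZMod n)) : q = -1 ∨ q = -2 := by
  have : NeZero n := ⟨by omega⟩
  obtain ⟨x, hx, rfl⟩ : ∃ x : ℕ, x < n ∧ (x : ZMod n) = q :=
    ⟨q.val, ZMod.val_lt q, ZMod.natCast_zmod_val q⟩
  rw [deltaA_natCast hn hx, natCast_inj_of_lt (by split_ifs <;> omega) (by omega)] at h
  have : x = n - 1 ∨ x = n - 2 := by grind
  rcases this with rfl | rfl
  · left; rw [Nat.cast_sub (by omega)]; simp
  · right; rw [Nat.cast_sub (by omega)]; simp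

theorem deltaA_neg_one {n : ℕ} (hn : 10 ≤ n) : deltaA n (-1) = ((n / 2 : ℕ) : ZMod n) := by
  have h : (-1 : ZMod n) = ((n - 1 : ℕ) : ZMod n) := by rw [Nat.cast_sub (by omega)]; simp
  rw [h, deltaA_natCast hn (by omega)]
  congr 1
  grind

theorem deltaA_neg_two {n : ℕ} (hn : 10 ≤ n) : deltaA n (-2) = ((n / 2 : ℕ) : ZMod n) := by
  have h : (-2 : ZMod n) = ((n - 2 : ℕ) : ZMod n) := by rw [Nat.cast_sub (by omega)]; simp
  rw [h, deltaA_natCast hn (by omega)]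
  congr 1
  grind

theorem deltaA_half_sub_one {n : ℕ} (hn : 10 ≤ n) :
    deltaA n (((n / 2 : ℕ) : ZMod n) - 1) = ((n / 2 : ℕ) : ZMod n) - 1 := by
  have h : ((n / 2 : ℕ) : ZMod n) - 1 = ((n / 2 - 1 : ℕ) : ZMod n) := by
    rw [Nat.cast_sub (by omega)]; simp
  rw [h, deltaA_natCast hn (by omega)]
  congr 1
  grind

/-- For every even `n ≥ 10` and every positive `k` such that the DFA
`𝒜_n^k` (with `δ_{a_k}(q) = δ_a(q + k)`) is standardized, `𝒜_n^k` fulfills Don's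
conjecture. -/
theorem stmt18 (n : ℕ) (hn : 10 ≤ n) (hev : Even n)
    (k : ℕ) (hk : 1 ≤ k)
    (hstd : Standardized (fun q => deltaA n (q + (k : ZMod n)))) :
    ∀ S : Set (ZMod n), S.Nonempty →
      ∃ w : List Letter,
        act (fun q => deltaA n (q + (k : ZMod n))) w '' Set.univ = S ∧
        w.length ≤ n * (n - S.ncard) := by
  have : NeZero n := ⟨by omega⟩
  set e : ZMod n → ZMod n := fun q => deltaA n (q + (k : ZMod n)) with he
  have hm : n = n / 2 + n / 2 := by
    obtain ⟨r, hr⟩ := hev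
    omega
  have hsurj : ∀ p, p ≠ 0 → ∃ q, e q = p := by
    intro p hp
    obtain ⟨q, hq⟩ := deltaA_surj hn p hp
    exact ⟨q - k, by simp [he, hq]⟩
  have hx : e (-1 - k) = ((n / 2 : ℕ) : ZMod n) := by simp [he, deltaA_neg_one hn]
  have hy : e (-2 - k) = ((n / 2 : ℕ) : ZMod n) := by simp [he, deltaA_neg_two hn]
  have h10 : (1 : ZMod n) ≠ 0 := by
    have := natCast_inj_of_lt (n := n) (a := 1) (b := 0) (by omega) (by omega)
    simpa using this
  have hxy : (-1 - k : ZMod n) ≠ -2 - k := by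
    intro h
    apply h10
    linear_combination h
  have hj' : e (-1 - k + ((n / 2 : ℕ) : ZMod n)) = ((n / 2 : ℕ) : ZMod n) - 1 := by
    have : (-1 - k + ((n / 2 : ℕ) : ZMod n)) + k = ((n / 2 : ℕ) : ZMod n) - 1 := by ring
    simp only [he]
    rw [this, deltaA_half_sub_one hn]
  -- Standardization makes `n / 2`, which has two preimages, equal to `e 0 = deltaA n k`.
  have hk' : (k : ZMod n) = -1 ∨ (k : ZMod n) = -2 := by
    have h0 := (hstd.2 ((n / 2 : ℕ) : ZMod n)).mp
      ((Set.one_lt_ncard (Set.toFinite _)).mpr ⟨_, hx, _, hy, hxy⟩)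
    apply eq_of_deltaA_eq_half hn
    rw [h0, he]
    simp
  have hjv : (-1 - k : ZMod n).val ≤ 1 := by
    rcases hk' with h | h
    · rw [h]; simp
    · have h1 : (-1 - -2 : ZMod n) = ((1 : ℕ) : ZMod n) := by push_cast; ring
      rw [h, h1, ZMod.val_natCast_of_lt (by omega)]
  have hcard : ∀ S : Set (ZMod n), S.ncard ≤ n := by
    intro S
    have := Set.ncard_le_ncard (Set.subset_univ S)
    rwa [Set.ncard_univ, Nat.card_zmod] at this
  intro S
  induction hd : n - S.ncard using Nat.strong_induction_on generalizing S with
  | _ d ih =>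
    intro hne
    by_cases hpr : S = Set.univ
    · exact ⟨[], by rw [hpr]; ext p; simp [act], by simp⟩
    · obtain ⟨T, w, hw, hlt, hlen⟩ :=
        exists_larger hm (by omega) e hsurj hxy hx hy hx hj' hjv hne hpr
      have hT := hcard T
      have hTne : T.Nonempty := Set.nonempty_of_ncard_ne_zero (by omega)
      obtain ⟨u, hu, hul⟩ := ih (n - T.ncard) (by omega) T rfl hTne
      refine ⟨u ++ w, ?_, ?_⟩
      · have : act e (u ++ w) = act e w ∘ act e u := funext (act_append e _ _)
        rw [this, Set.image_comp, hu, hw]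
      · rw [List.length_append]
        calc u.length + w.length ≤ n * (n - T.ncard) + n := by omega
          _ = n * (n - T.ncard + 1) := by ring
          _ ≤ n * d := Nat.mul_le_mul_left _ (by omega)
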